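/- Simulation of arbitrary monotone Boolean functions by the fungal sandpile automaton with word V⁴H⁴: for every n ≥ 1 and every function f : (Fin n → Bool) → Bool that is monotone with respect to the pointwise order (false ≤ true), there exist T ≥ 1, a finitely supported configuration c : ℤ × ℤ → ℕ, an injective assignment of input cells i : Fin n → ℤ × ℤ, and an output cell o distinct from all input cells with c(o) = 0, such that for every input vector b : Fin n → Bool, running the automaton with the word V⁴H⁴ repeated periodically from the configuration c + ∑_{k} 4·[b(k)]·δ_{i(k)}, the cell o holds a positive number of chips at some time step t ≤ T if and only if f(b) is true. -/

import Mathlib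

/-- The H-step of the fungal sandpile automaton: every cell with at least 4 chips
loses 2 chips and sends one chip to each of its two horizontal neighbours. -/
def Hstep (c : ℤ × ℤ → ℕ) : ℤ × ℤ → ℕ := fun v =>
  c v - 2 * (if 4 ≤ c v then 1 else 0)
    + (if 4 ≤ c (v - (1, 0)) then 1 else 0)
    + (if 4 ≤ c (v + (1, 0)) then 1 else 0)

/-- The V-step: analogous with the vertical neighbours. -/
def Vstep (c : ℤ × ℤ → ℕ) : ℤ × ℤ → ℕ := fun v =>
  c v - 2 * (if 4 ≤ c v then 1 else 0)
    + (if 4 ≤ c (v - (0, 1)) then 1 else 0)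
    + (if 4 ≤ c (v + (0, 1)) then 1 else 0)

inductive Letter | H | V
  deriving DecidableEq

/-- The step associated to a letter. -/
def Letter.step : Letter → (ℤ × ℤ → ℕ) → (ℤ × ℤ → ℕ)
  | .H => Hstep
  | .V => Vstep

/-- Apply the steps of a word in order (head first). -/
def runWord : List Letter → (ℤ × ℤ → ℕ) → (ℤ × ℤ → ℕ)
  | [], c => c
  | l :: ls, c => runWord ls (l.step c)

/-- Run the automaton `t` steps with the word `w` repeated periodically. -/
def runPeriodic (w : List Letter) (c : ℤ × ℤ → ℕ) : ℕ → (ℤ × ℤ → ℕ)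
  | 0 => c
  | t + 1 => (w.getD (t % w.length) Letter.H).step (runPeriodic w c t)

/-- One chip at `u`, zero elsewhere. -/
def delta (u : ℤ × ℤ) : ℤ × ℤ → ℕ := fun v => if v = u then 1 else 0

/-- Numerical value of a Boolean. -/
def bnum (b : Bool) : ℕ := if b then 1 else 0

/-- The word V⁴H⁴. -/
def wV4H4 : List Letter := [.V, .V, .V, .V, .H, .H, .H, .H]

namespace Fungal

/-- Times along a square wave (0 means: not on the wave). -/
def waveT (z h : ℕ) : ℕ :=
  bif Nat.beq (z % 8) 0 then (bif Nat.ble h 4 then 16 * (z / 8) + h else 0)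
  else bif Nat.blt (z % 8) 4 then (bif Nat.beq h 4 then 16 * (z / 8) + 4 + z % 8 else 0)
  else bif Nat.beq (z % 8) 4 then (bif Nat.ble h 4 then 16 * (z / 8) + 12 - h else 0)
  else (bif Nat.beq h 0 then 16 * (z / 8) + 8 + z % 8 else 0)

/-- Firing times of an input row. -/
def TA (X Y : ℕ) : ℕ := bif Nat.ble 9 Y then waveT (X + 6) (Y - 9) else 0

/-- Firing times of the collecting row. -/
def TW (X Y : ℕ) : ℕ := bif Nat.ble 4 Y then waveT (X + 5) (Y - 4) - 8 else 0

/-- Firing times of a column in a tile of an input row. -/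
def TB (ga : Bool) (X Y : ℕ) : ℕ :=
  bif Nat.ble Y 4 && Nat.beq X 7 then Y + 1
  else bif Nat.ble 9 Y then
    (bif Nat.beq X 7 && Nat.ble Y 12 then Y + 9
    else bif Nat.beq X 7 && Nat.beq Y 16 then 33
    else bif Nat.beq X 7 && Nat.beq Y 17 then 34
    else bif Nat.beq Y 12 && (Nat.ble 3 X && Nat.ble X 6) then 28 - X
    else bif Nat.beq X 3 && (Nat.ble 13 Y && Nat.ble Y 16) then Y + 13
    else bif Nat.beq Y 16 && (Nat.ble 4 X && Nat.ble X 7) then X + 26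
    else 0)
  else bif ga then
    (bif Nat.beq Y 4 && (Nat.ble 8 X && Nat.ble X 11) then X - 2
    else bif Nat.beq X 11 && (Nat.ble 5 Y && Nat.ble Y 8) then Y + 5
    else bif Nat.beq Y 8 && (Nat.ble 7 X && Nat.ble X 10) then 24 - X
    else 0)
  else
    (bif Nat.beq Y 4 && (Nat.ble 3 X && Nat.ble X 6) then 12 - X
    else bif Nat.beq X 3 && (Nat.ble 5 Y && Nat.ble Y 8) then Y + 5
    else bif Nat.beq Y 8 && (Nat.ble 4 X && Nat.ble X 7) then X + 10
    else 0)

/-- Firing times of a column below the collecting row. -/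
def TBW (X Y : ℕ) : ℕ := bif Nat.beq X 7 && Nat.ble Y 3 then Y + 1 else 0

/-- Has an event fired? -/
def hit (f : Bool) (tab c : ℕ) : Bool := Nat.blt 0 tab && (Nat.blt tab c && f)
/-- Does an event fire now? -/
def nowb (f : Bool) (tab c : ℕ) : Bool := Nat.blt 0 tab && (Nat.beq tab c && f)
/-- Vertical direction for clock 1 and clock 2. -/
def d1 (tab : ℕ) : Bool := Nat.blt (tab % 8) 4
def d2 (tab : ℕ) : Bool := Nat.blt ((tab + 7) % 8) 4

/-- Number of vertical topplings so far. -/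
def kV (f1 f2 : ℕ → Bool) (t1 t2 : ℕ → ℕ → ℕ) (c1 c2 X Y : ℕ) : ℕ :=
  (hit (d1 (t1 X Y) && f1 (t1 X Y)) (t1 X Y) c1).toNat
    + (hit (d2 (t2 X Y) && f2 (t2 X Y)) (t2 X Y) c2).toNat
/-- Number of horizontal topplings so far. -/
def kH (f1 f2 : ℕ → Bool) (t1 t2 : ℕ → ℕ → ℕ) (c1 c2 X Y : ℕ) : ℕ :=
  (hit (!d1 (t1 X Y) && f1 (t1 X Y)) (t1 X Y) c1).toNat
    + (hit (!d2 (t2 X Y) && f2 (t2 X Y)) (t2 X Y) c2).toNat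
/-- Number of topplings now. -/
def kN (f1 f2 : ℕ → Bool) (t1 t2 : ℕ → ℕ → ℕ) (c1 c2 X Y : ℕ) : ℕ :=
  (nowb (f1 (t1 X Y)) (t1 X Y) c1).toNat + (nowb (f2 (t2 X Y)) (t2 X Y) c2).toNat

/-- The local condition: a cell topples now iff it has at least four chips. -/
def condOK (p q k : ℕ) : Bool :=
  Nat.ble q p && (bif Nat.ble (q + 4) p then Nat.beq k 1 else Nat.beq k 0)

def tileOK (f1 f2 : ℕ → Bool) (t1 t2 : ℕ → ℕ → ℕ) (c1 c2 : ℕ) (base X Y : ℕ) : Bool :=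
  condOK (base + kV f1 f2 t1 t2 c1 c2 X (Y + 1) + kV f1 f2 t1 t2 c1 c2 X (Y - 1)
      + kH f1 f2 t1 t2 c1 c2 (X + 1) Y + kH f1 f2 t1 t2 c1 c2 (X - 1) Y)
    (2 * (kV f1 f2 t1 t2 c1 c2 X Y + kH f1 f2 t1 t2 c1 c2 X Y))
    (kN f1 f2 t1 t2 c1 c2 X Y)

/-- Flag of a wave token: mode 0 is no token, mode 1 a token that starts in this tile. -/
def mf (mode thr tab : ℕ) : Bool :=
  bif Nat.beq mode 0 then false else bif Nat.beq mode 1 then Nat.ble thr tab else true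

/-- Flag of a column token: before and after the gate. -/
def bf (g0 g1 : Bool) (tab : ℕ) : Bool := bif Nat.blt tab 14 then g0 else g1

def rowBase (sv : ℕ) (ga : Bool) (X Y : ℕ) : ℕ :=
  bif Nat.beq X 2 && Nat.beq Y 9 then sv
  else bif ga && (Nat.beq X 10 && Nat.beq Y 8) then 2
  else bif Nat.beq (TA X Y + TB ga X Y) 0 then 0 else 3

def topBase (isO : Bool) (X Y : ℕ) : ℕ :=
  bif isO && (Nat.beq X 2 && Nat.beq Y 4) then 0
  else bif Nat.beq (TW X Y + TBW X Y) 0 then 0 else 3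

/-- bounded universal quantification, computed by recursion -/
def allB (p : ℕ → Bool) : ℕ → Bool
  | 0 => true
  | k + 1 => p k && allB p k

/-- no event of a table at a cell or its neighbours -/
def quiet (t : ℕ → ℕ → ℕ) (X Y : ℕ) : Bool :=
  Nat.beq (t X Y + t X (Y + 1) + t X (Y - 1) + t (X + 1) Y + t (X - 1) Y) 0

/-- loop over the clock, unless the cell is quiet -/
def loopC (qu : Bool) (p : ℕ → Bool) (N : ℕ) : Bool := bif qu then p 64 else allB p N

def check1 (mode sv : ℕ) (ga : Bool) : Bool :=
  allB (fun x => allB (fun y => loopC (quiet TA (x+1) (y+1)) (fun c =>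
    (Nat.beq mode 1 && Nat.blt c 16) ||
    tileOK (mf mode 16) (fun _ => false) TA (TB ga) c 0 (rowBase sv ga (x+1) (y+1)) (x+1) (y+1))
    65) 16) 16

def check2 (mode sv : ℕ) (ga : Bool) : Bool :=
  allB (fun x => allB (fun y => loopC (quiet (TB ga) (x+1) (y+1)) (fun c =>
    tileOK (mf mode 16) (bf true (!ga || !(Nat.beq mode 0))) TA (TB ga) 64 c
      (rowBase sv ga (x+1) (y+1)) (x+1) (y+1)) 65) 16) 16

def check3 : Bool :=
  allB (fun x => allB (fun y => allB (fun e =>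
    tileOK (mf 1 20) (fun _ => true) TW TBW (min e 64) (min (e - 15) 64)
      (topBase false (x+1) (y+1)) (x+1) (y+1)) 81) 16) 16

def check4 : Bool :=
  allB (fun x => allB (fun y => allB (fun c =>
    tileOK (mf 2 20) (fun _ => false) TW TBW c 0
      (topBase false (x+1) (y+1)) (x+1) (y+1)) 65) 16) 16

def check5 : Bool :=
  allB (fun x => allB (fun y => allB (fun c =>
    tileOK (mf 2 20) (fun _ => false) TW TBW c 0
      (topBase true (x+1) (y+1)) (x+1) (y+1)) 7) 16) 16

theorem check1_all : (check1 1 4 true && check1 1 4 false && check1 2 3 true && check1 2 3 false)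
    = true := by decide +kernel
theorem check2_all0 : (check2 0 0 true && check2 0 0 false && check2 0 3 true && check2 0 3 false)
    = true := by decide +kernel
theorem check2_all1 : (check2 1 4 true && check2 1 4 false && check2 2 3 true && check2 2 3 false)
    = true := by decide +kernel
theorem check3_true : check3 = true := by decide +kernel
theorem check4_true : check4 = true := by decide +kernel
theorem check5_true : check5 = true := by decide +kernel

theorem allB_spec {p : ℕ → Bool} {N : ℕ} (h : allB p N = true) : ∀ i < N, p i = true := by
  induction N with
  | zero => intro i hi; omega
  | succ k ih =>
    simp only [allB, Bool.and_eq_true] at h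
    intro i hi
    rcases Nat.lt_succ_iff_lt_or_eq.mp hi with h1 | h1
    · exact ih h.2 i h1
    · exact h1 ▸ h.1

theorem tileOK_congr {f1 f2 f1' f2' : ℕ → Bool} {t1 t2 : ℕ → ℕ → ℕ} {c1 c2 c1' c2' base X Y : ℕ}
    (h : ∀ x y, ((x = X ∧ (y = Y ∨ y = Y + 1 ∨ y = Y - 1)) ∨ (y = Y ∧ (x = X + 1 ∨ x = X - 1))) →
      kV f1 f2 t1 t2 c1 c2 x y = kV f1' f2' t1 t2 c1' c2' x y ∧
      kH f1 f2 t1 t2 c1 c2 x y = kH f1' f2' t1 t2 c1' c2' x y ∧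
      kN f1 f2 t1 t2 c1 c2 x y = kN f1' f2' t1 t2 c1' c2' x y) :
    tileOK f1 f2 t1 t2 c1 c2 base X Y = tileOK f1' f2' t1 t2 c1' c2' base X Y := by
  unfold tileOK
  rw [(h X Y (by simp)).1, (h X Y (by simp)).2.1, (h X Y (by simp)).2.2, (h X (Y+1) (by simp)).1,
    (h X (Y-1) (by simp)).1, (h (X+1) Y (by simp)).2.1, (h (X-1) Y (by simp)).2.1]

theorem blt_iff {a b : ℕ} : Nat.blt a b = true ↔ a < b := by
  simp [Nat.blt, Nat.ble_eq]

/-- if the first family has no token, its clock is irrelevant -/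
theorem tileOK_f1 {f1 f2 : ℕ → Bool} {t1 t2 : ℕ → ℕ → ℕ} {c1 c2 base X Y : ℕ} (c1' : ℕ)
    (h : ∀ k, f1 k = false) :
    tileOK f1 f2 t1 t2 c1 c2 base X Y = tileOK f1 f2 t1 t2 c1' c2 base X Y := by
  apply tileOK_congr
  intro x y _
  simp [kV, kH, kN, hit, nowb, h]

theorem tileOK_f2 {f1 f2 : ℕ → Bool} {t1 t2 : ℕ → ℕ → ℕ} {c1 c2 base X Y : ℕ}
    (f2' : ℕ → Bool) (h : ∀ k, f2 k = false) :
    tileOK f1 f2 t1 t2 c1 c2 base X Y = tileOK f1 f2' t1 t2 c1 0 base X Y := by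
  apply tileOK_congr
  intro x y _
  have h0 : ∀ k f, hit f k 0 = false := by intro k f; simp [hit, Nat.blt]
  have h1 : ∀ k f, nowb f k 0 = false := by intro k f; cases k <;> simp [nowb, Nat.blt]
  refine ⟨?_, ?_, ?_⟩ <;> simp only [kV, kH, kN, h0, h1] <;> simp [hit, nowb, h]

theorem tileOK_c2 {f1 f2 : ℕ → Bool} {t1 t2 : ℕ → ℕ → ℕ} {c1 base X Y : ℕ}
    (f2' : ℕ → Bool) :
    tileOK f1 f2 t1 t2 c1 0 base X Y = tileOK f1 f2' t1 t2 c1 0 base X Y := by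
  apply tileOK_congr
  intro x y _
  have h0 : ∀ k f, hit f k 0 = false := by intro k f; simp [hit, Nat.blt]
  have h1 : ∀ k f, nowb f k 0 = false := by intro k f; cases k <;> simp [nowb, Nat.blt]
  refine ⟨?_, ?_, ?_⟩ <;> simp only [kV, kH, kN, h0, h1]

theorem hit_zero (f : Bool) (c : ℕ) : hit f 0 c = false := by simp [hit, Nat.blt]
theorem nowb_zero (f : Bool) (c : ℕ) : nowb f 0 c = false := by simp [nowb, Nat.blt]

theorem quiet_spec {t : ℕ → ℕ → ℕ} {X Y : ℕ} (h : quiet t X Y = true) :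
    ∀ x y, ((x = X ∧ (y = Y ∨ y = Y + 1 ∨ y = Y - 1)) ∨ (y = Y ∧ (x = X + 1 ∨ x = X - 1))) →
      t x y = 0 := by
  have h' : t X Y + t X (Y + 1) + t X (Y - 1) + t (X + 1) Y + t (X - 1) Y = 0 :=
    Nat.eq_of_beq_eq_true h
  rintro x y (⟨rfl, rfl | rfl | rfl⟩ | ⟨rfl, rfl | rfl⟩) <;> omega

theorem tileOK_quiet1 {f1 f2 : ℕ → Bool} {t1 t2 : ℕ → ℕ → ℕ} {c1 c2 base X Y : ℕ} (c1' : ℕ)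
    (h : quiet t1 X Y = true) :
    tileOK f1 f2 t1 t2 c1 c2 base X Y = tileOK f1 f2 t1 t2 c1' c2 base X Y := by
  apply tileOK_congr
  intro x y hxy
  simp [kV, kH, kN, hit_zero, nowb_zero, quiet_spec h x y hxy]

theorem tileOK_quiet2 {f1 f2 : ℕ → Bool} {t1 t2 : ℕ → ℕ → ℕ} {c1 c2 base X Y : ℕ} (c2' : ℕ)
    (h : quiet t2 X Y = true) :
    tileOK f1 f2 t1 t2 c1 c2 base X Y = tileOK f1 f2 t1 t2 c1 c2' base X Y := by
  apply tileOK_congr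
  intro x y hxy
  simp [kV, kH, kN, hit_zero, nowb_zero, quiet_spec h x y hxy]

theorem check1_spec {mode sv : ℕ} {ga : Bool} (h : check1 mode sv ga = true) {X Y c : ℕ}
    (hX : 1 ≤ X) (hX' : X ≤ 16) (hY : 1 ≤ Y) (hY' : Y ≤ 16) (hc : c ≤ 64)
    (hm : mode = 1 → 16 ≤ c) :
    tileOK (mf mode 16) (fun _ => false) TA (TB ga) c 0 (rowBase sv ga X Y) X Y = true := by
  have h1 := allB_spec (allB_spec h (X - 1) (by omega)) (Y - 1) (by omega)
  simp only [Nat.sub_add_cancel hX, Nat.sub_add_cancel hY] at h1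
  unfold loopC at h1
  cases hq : quiet TA X Y with
  | true =>
    rw [hq] at h1
    simp only [cond_true, Bool.or_eq_true, Bool.and_eq_true] at h1
    rcases h1 with ⟨_, h2⟩ | h1
    · simp [Nat.blt] at h2
    · rw [tileOK_quiet1 64 hq]; exact h1
  | false =>
    rw [hq] at h1
    have h2 := allB_spec h1 c (by omega)
    simp only [Bool.or_eq_true, Bool.and_eq_true] at h2
    rcases h2 with ⟨h3, h4⟩ | h2
    · have := hm (Nat.eq_of_beq_eq_true h3)
      rw [blt_iff] at h4; omega
    · exact h2

theorem check2_spec {mode sv : ℕ} {ga : Bool} (h : check2 mode sv ga = true) {X Y c : ℕ}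
    (hX : 1 ≤ X) (hX' : X ≤ 16) (hY : 1 ≤ Y) (hY' : Y ≤ 16) (hc : c ≤ 64) :
    tileOK (mf mode 16) (bf true (!ga || !(Nat.beq mode 0))) TA (TB ga) 64 c
      (rowBase sv ga X Y) X Y = true := by
  have h1 := allB_spec (allB_spec h (X - 1) (by omega)) (Y - 1) (by omega)
  simp only [Nat.sub_add_cancel hX, Nat.sub_add_cancel hY] at h1
  unfold loopC at h1
  cases hq : quiet (TB ga) X Y with
  | true =>
    rw [hq] at h1
    rw [tileOK_quiet2 64 hq]; exact h1
  | false =>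
    rw [hq] at h1
    exact allB_spec h1 c (by omega)

theorem check3_spec {X Y : ℕ} (e : ℕ)
    (hX : 1 ≤ X) (hX' : X ≤ 16) (hY : 1 ≤ Y) (hY' : Y ≤ 16) :
    tileOK (mf 1 20) (fun _ => true) TW TBW (min e 64) (min (e - 15) 64)
      (topBase false X Y) X Y = true := by
  have h1 := allB_spec (allB_spec (allB_spec check3_true (X - 1) (by omega)) (Y - 1) (by omega))
    (min e 80) (by omega)
  simp only [Nat.sub_add_cancel hX, Nat.sub_add_cancel hY] at h1
  have e1 : min (min e 80) 64 = min e 64 := by omega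
  have e2 : min (min e 80 - 15) 64 = min (e - 15) 64 := by omega
  rwa [e1, e2] at h1

theorem check4_spec {X Y c : ℕ}
    (hX : 1 ≤ X) (hX' : X ≤ 16) (hY : 1 ≤ Y) (hY' : Y ≤ 16) (hc : c ≤ 64) :
    tileOK (mf 2 20) (fun _ => false) TW TBW c 0 (topBase false X Y) X Y = true := by
  have h1 := allB_spec (allB_spec (allB_spec check4_true (X - 1) (by omega)) (Y - 1) (by omega))
    c (by omega)
  simpa only [Nat.sub_add_cancel hX, Nat.sub_add_cancel hY] using h1

theorem check5_spec {X Y c : ℕ}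
    (hX : 1 ≤ X) (hX' : X ≤ 16) (hY : 1 ≤ Y) (hY' : Y ≤ 16) (hc : c ≤ 6) :
    tileOK (mf 2 20) (fun _ => false) TW TBW c 0 (topBase true X Y) X Y = true := by
  have h1 := allB_spec (allB_spec (allB_spec check5_true (X - 1) (by omega)) (Y - 1) (by omega))
    c (by omega)
  simpa only [Nat.sub_add_cancel hX, Nat.sub_add_cancel hY] using h1


/-- clocks are truncated to `0..64` -/
def clk (e : ℤ) : ℕ := min e.toNat 64

/-- All data of the layout. -/
structure Par where
  n : ℤ
  m : ℤ
  b : ℤ → Bool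
  gs : ℤ → ℤ → Bool
  al : ℤ → ℤ → Bool
  D : ℤ → ℤ
  has : Bool
  S : ℤ

namespace Par

def modeA (P : Par) (I J : ℤ) : ℕ :=
  if P.b J = true then (if I < 0 then 0 else if I = 0 then 1 else 2) else 0
def modeW (P : Par) (I : ℤ) : ℕ :=
  if P.has = true then (if I < P.S then 0 else if I = P.S then 1 else 2) else 0

def f1 (P : Par) (I J : ℤ) : ℕ → Bool :=
  if J < P.n then mf (P.modeA I J) 16 else if J = P.n then mf (P.modeW I) 20 else fun _ => false
def f2 (P : Par) (I J : ℤ) : ℕ → Bool := bf (P.al I J) (P.al I (J + 1))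
def t1 (P : Par) (J : ℤ) : ℕ → ℕ → ℕ :=
  if J < P.n then TA else if J = P.n then TW else fun _ _ => 0
def t2 (P : Par) (I J : ℤ) : ℕ → ℕ → ℕ :=
  if J < P.n then TB (P.gs I J) else if J = P.n then TBW else fun _ _ => 0
def e1 (P : Par) (t I J : ℤ) : ℤ :=
  if J < P.n then t + 16 - 32 * I else t + 16 - P.D P.S - 32 * P.n - 32 * (I - P.S)
def e2 (P : Par) (t I J : ℤ) : ℤ := t + 1 - P.D I - 32 * J
def sv (P : Par) (I J : ℤ) : ℕ := if I = 0 then (if P.b J = true then 4 else 0) else 3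
def base (P : Par) (I J : ℤ) : ℕ → ℕ → ℕ :=
  if J < P.n then rowBase (P.sv I J) (P.gs I J)
  else if J = P.n then topBase (decide (I = P.m)) else fun _ _ => 0

def eV (P : Par) (t I J : ℤ) (X Y : ℕ) : ℕ :=
  kV (P.f1 I J) (P.f2 I J) (P.t1 J) (P.t2 I J) (clk (P.e1 t I J)) (clk (P.e2 t I J)) X Y
def eH (P : Par) (t I J : ℤ) (X Y : ℕ) : ℕ :=
  kH (P.f1 I J) (P.f2 I J) (P.t1 J) (P.t2 I J) (clk (P.e1 t I J)) (clk (P.e2 t I J)) X Y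
def eN (P : Par) (t I J : ℤ) (X Y : ℕ) : ℕ :=
  kN (P.f1 I J) (P.f2 I J) (P.t1 J) (P.t2 I J) (clk (P.e1 t I J)) (clk (P.e2 t I J)) X Y

/-- local coordinate -/
def lc (x : ℤ) : ℕ := (x % 16).toNat + 1

def gV (P : Par) (t x y : ℤ) : ℕ := P.eV t (x / 16) (y / 16) (lc x) (lc y)
def gH (P : Par) (t x y : ℤ) : ℕ := P.eH t (x / 16) (y / 16) (lc x) (lc y)
def gN (P : Par) (t x y : ℤ) : ℕ := P.eN t (x / 16) (y / 16) (lc x) (lc y)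

/-- The predicted configuration. -/
def C (P : Par) (t : ℤ) (v : ℤ × ℤ) : ℕ :=
  (P.base (v.1 / 16) (v.2 / 16) (lc v.1) (lc v.2)
    + P.gV t v.1 (v.2 + 1) + P.gV t v.1 (v.2 - 1)
    + P.gH t (v.1 + 1) v.2 + P.gH t (v.1 - 1) v.2)
    - 2 * (P.gV t v.1 v.2 + P.gH t v.1 v.2)

/-- The properties of the data that are used. -/
structure Good (P : Par) : Prop where
  al_neg : ∀ I J, I < 0 → P.al I J = false
  al_succ : ∀ I J, J < P.n → P.al I (J + 1) = (P.al I J && (!P.gs I J || P.b J))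
  al_top : ∀ I, P.al I (P.n + 1) = P.al I P.n
  al_low : ∀ I J, 0 ≤ I → J ≤ 0 → P.al I J = true
  b_neg : ∀ J, J < 0 → P.b J = false
  D8 : ∀ I, P.D I % 8 = 0
  Dlow : ∀ I, 0 ≤ I → 32 * I + 48 ≤ P.D I
  n_nonneg : 0 ≤ P.n
  S_nonneg : P.has = true → 0 ≤ P.S
  S_lt : P.has = true → P.S < P.m
  S_al : P.has = true → P.al P.S P.n = true
  S_min : P.has = true → ∀ I, I < P.S → P.al I P.n = false
  S_D : P.has = true → ∀ I, P.S < I → P.D P.S + 32 * P.m ≤ P.D I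
  no_al : P.has = false → ∀ I, P.al I P.n = false

end Par

theorem clk_le (e : ℤ) : clk e ≤ 64 := by unfold clk; omega

theorem hit_shift (f : Bool) (tab : ℕ) (e : ℤ) (h0 : 0 < tab) (h : tab + 32 < 64) :
    hit f (tab + 32) (clk e) = hit f tab (clk (e - 32)) := by
  unfold hit
  have h1 : Nat.blt 0 (tab + 32) = Nat.blt 0 tab := by
    rw [Bool.eq_iff_iff, blt_iff, blt_iff]; omega
  have h2 : Nat.blt (tab + 32) (clk e) = Nat.blt tab (clk (e - 32)) := by
    rw [Bool.eq_iff_iff, blt_iff, blt_iff]; unfold clk; omega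
  rw [h1, h2]

theorem hit_succ (d f : Bool) (tab : ℕ) (e : ℤ) (h : tab < 64) :
    (hit (d && f) tab (clk (e + 1))).toNat
      = (hit (d && f) tab (clk e)).toNat + if d = true then (nowb f tab (clk e)).toNat else 0 := by
  cases d
  · simp [hit]
  cases f
  · simp [hit, nowb]
  simp only [hit, nowb, Bool.and_true, if_true]
  rcases Nat.eq_zero_or_pos tab with h0 | h0
  · subst h0
    have hz : Nat.blt 0 0 = false := rfl
    simp only [hz, Bool.false_and]; rfl
  · have h1 : Nat.blt 0 tab = true := blt_iff.2 h0
    rw [h1, Bool.true_and, Bool.true_and, Bool.true_and]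
    by_cases h3 : tab = clk e
    · have a1 : Nat.blt tab (clk (e + 1)) = true := by rw [blt_iff]; unfold clk at *; omega
      have a2 : Nat.blt tab (clk e) = false := by
        rw [Bool.eq_false_iff, Ne, blt_iff]; omega
      have a3 : Nat.beq tab (clk e) = true := by rw [Nat.beq_eq]; exact h3
      rw [a1, a2, a3]; rfl
    · have a1 : Nat.blt tab (clk (e + 1)) = Nat.blt tab (clk e) := by
        rw [Bool.eq_iff_iff, blt_iff, blt_iff]; unfold clk at *; omega
      have a3 : Nat.beq tab (clk e) = false := by
        rw [Bool.eq_false_iff, Ne, Nat.beq_eq]; exact h3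
      rw [a1, a3]; rfl

theorem nowb_true {f : Bool} {tab : ℕ} {e : ℤ} (h : tab < 64) (hn : nowb f tab (clk e) = true) :
    (tab : ℤ) = e := by
  simp only [nowb, Bool.and_eq_true, blt_iff, Nat.beq_eq] at hn
  unfold clk at hn
  omega

namespace Par

theorem TA_lt : ∀ X ≤ 17, ∀ Y ≤ 17, TA X Y < 64 := by decide +kernel
theorem TW_lt : ∀ X ≤ 17, ∀ Y ≤ 17, TW X Y < 64 := by decide +kernel
theorem TB_lt : ∀ ga, ∀ X ≤ 17, ∀ Y ≤ 17, TB ga X Y < 64 := by decide +kernel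
theorem TBW_lt : ∀ X ≤ 17, ∀ Y ≤ 17, TBW X Y < 64 := by decide +kernel

theorem t1_lt (P : Par) (J : ℤ) (X Y : ℕ) (hX : X ≤ 17) (hY : Y ≤ 17) : P.t1 J X Y < 64 := by
  unfold t1
  split_ifs
  · exact TA_lt X hX Y hY
  · exact TW_lt X hX Y hY
  · simp

theorem t2_lt (P : Par) (I J : ℤ) (X Y : ℕ) (hX : X ≤ 17) (hY : Y ≤ 17) : P.t2 I J X Y < 64 := by
  unfold t2
  split_ifs
  · exact TB_lt _ X hX Y hY
  · exact TBW_lt X hX Y hY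
  · simp

theorem e1_succ (P : Par) (t I J : ℤ) : P.e1 (t + 1) I J = P.e1 t I J + 1 := by
  unfold e1; split_ifs <;> ring
theorem e2_succ (P : Par) (t I J : ℤ) : P.e2 (t + 1) I J = P.e2 t I J + 1 := by
  unfold e2; ring

theorem dir1 {P : Par} (hP : P.Good) {t I J : ℤ} {X Y : ℕ} {f : Bool} (hX : X ≤ 17) (hY : Y ≤ 17)
    (h : nowb f (P.t1 J X Y) (clk (P.e1 t I J)) = true) :
    d1 (P.t1 J X Y) = true ↔ t % 8 < 4 := by
  have h1 := nowb_true (t1_lt P J X Y hX hY) h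
  have h2 := hP.D8 P.S
  unfold d1
  rw [blt_iff]
  unfold e1 at h1
  split_ifs at h1 <;> omega

theorem dir2 {P : Par} (hP : P.Good) {t I J : ℤ} {X Y : ℕ} {f : Bool} (hX : X ≤ 17) (hY : Y ≤ 17)
    (h : nowb f (P.t2 I J X Y) (clk (P.e2 t I J)) = true) :
    d2 (P.t2 I J X Y) = true ↔ t % 8 < 4 := by
  have h1 := nowb_true (t2_lt P I J X Y hX hY) h
  have h2 := hP.D8 I
  unfold d2
  rw [blt_iff]
  unfold e2 at h1
  omega

theorem eV_succ {P : Par} (hP : P.Good) (t I J : ℤ) {X Y : ℕ} (hX : X ≤ 17) (hY : Y ≤ 17) :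
    P.eV (t + 1) I J X Y = P.eV t I J X Y + if t % 8 < 4 then P.eN t I J X Y else 0 := by
  unfold eV eN kV kN
  rw [e1_succ, e2_succ, hit_succ _ _ _ _ (t1_lt P J X Y hX hY),
    hit_succ _ _ _ _ (t2_lt P I J X Y hX hY)]
  have a1 := @dir1 P hP t I J X Y (P.f1 I J (P.t1 J X Y)) hX hY
  have a2 := @dir2 P hP t I J X Y (P.f2 I J (P.t2 I J X Y)) hX hY
  cases h1 : nowb (P.f1 I J (P.t1 J X Y)) (P.t1 J X Y) (clk (P.e1 t I J)) <;>
  cases h2 : nowb (P.f2 I J (P.t2 I J X Y)) (P.t2 I J X Y) (clk (P.e2 t I J)) <;>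
  simp only [h1, h2, forall_const, reduceCtorEq, false_implies] at a1 a2 <;>
  simp only [Bool.toNat_true, Bool.toNat_false, *] <;>
  split_ifs <;> omega

theorem eH_succ {P : Par} (hP : P.Good) (t I J : ℤ) {X Y : ℕ} (hX : X ≤ 17) (hY : Y ≤ 17) :
    P.eH (t + 1) I J X Y = P.eH t I J X Y + if t % 8 < 4 then 0 else P.eN t I J X Y := by
  unfold eH eN kH kN
  rw [e1_succ, e2_succ, hit_succ _ _ _ _ (t1_lt P J X Y hX hY),
    hit_succ _ _ _ _ (t2_lt P I J X Y hX hY)]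
  have a1 := @dir1 P hP t I J X Y (P.f1 I J (P.t1 J X Y)) hX hY
  have a2 := @dir2 P hP t I J X Y (P.f2 I J (P.t2 I J X Y)) hX hY
  simp only [Bool.not_eq_true', ← Bool.not_eq_true]
  cases h1 : nowb (P.f1 I J (P.t1 J X Y)) (P.t1 J X Y) (clk (P.e1 t I J)) <;>
  cases h2 : nowb (P.f2 I J (P.t2 I J X Y)) (P.t2 I J X Y) (clk (P.e2 t I J)) <;>
  simp only [h1, h2, forall_const, reduceCtorEq, false_implies] at a1 a2 <;>
  simp only [Bool.toNat_true, Bool.toNat_false, *] <;>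
  split_ifs <;> omega

theorem TA_edge : ∀ X ≤ 17, TA X 0 = 0 ∧ TA X 1 = 0 ∧ TA X 16 = 0 ∧ TA X 17 = 0 := by
  decide +kernel
theorem TW_edge : ∀ X ≤ 17, TW X 0 = 0 ∧ TW X 1 = 0 ∧ TW X 16 = 0 ∧ TW X 17 = 0 := by
  decide +kernel
theorem TB_edge : ∀ ga, ∀ X ≤ 17, X ≠ 7 → TB ga X 0 = 0 ∧ TB ga X 1 = 0 ∧
    (TB ga X 16 = 0 ∨ d2 (TB ga X 16) = false) ∧ TB ga X 17 = 0 := by decide +kernel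
theorem TB_edge7 : ∀ ga, TB ga 7 0 = 1 ∧ TB ga 7 1 = 2 ∧
    TB ga 7 16 = 33 ∧ TB ga 7 17 = 34 := by decide +kernel
theorem TBW_edge : ∀ X ≤ 17, X ≠ 7 → TBW X 0 = 0 ∧ TBW X 1 = 0 := by decide +kernel
theorem TBW_edge' : ∀ X ≤ 17, TBW X 16 = 0 ∧ TBW X 17 = 0 := by decide +kernel
theorem TBW_edge7 : TBW 7 0 = 1 ∧ TBW 7 1 = 2 := by decide +kernel
theorem TB_side : ∀ ga, ∀ Y ≤ 17, TB ga 0 Y = 0 ∧ TB ga 1 Y = 0 ∧ TB ga 16 Y = 0 ∧ TB ga 17 Y = 0 := by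
  decide +kernel
theorem TBW_side : ∀ Y ≤ 17, TBW 0 Y = 0 ∧ TBW 1 Y = 0 ∧ TBW 16 Y = 0 ∧ TBW 17 Y = 0 := by
  decide +kernel
theorem TA_side : ∀ Y ≤ 17, Y ≠ 9 → TA 0 Y = 0 ∧ TA 1 Y = 0 ∧ TA 16 Y = 0 ∧ TA 17 Y = 0 := by
  decide +kernel
theorem TW_side : ∀ Y ≤ 17, Y ≠ 4 → TW 0 Y = 0 ∧ TW 1 Y = 0 ∧ TW 16 Y = 0 ∧ TW 17 Y = 0 := by
  decide +kernel

theorem t1_edge (P : Par) (J : ℤ) {X : ℕ} (hX : X ≤ 17) :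
    P.t1 J X 0 = 0 ∧ P.t1 J X 1 = 0 ∧ P.t1 J X 16 = 0 ∧ P.t1 J X 17 = 0 := by
  unfold t1
  split_ifs
  · exact TA_edge X hX
  · exact TW_edge X hX
  · simp

theorem t2_side (P : Par) (I J : ℤ) {Y : ℕ} (hY : Y ≤ 17) :
    P.t2 I J 0 Y = 0 ∧ P.t2 I J 1 Y = 0 ∧ P.t2 I J 16 Y = 0 ∧ P.t2 I J 17 Y = 0 := by
  unfold t2
  split_ifs
  · exact TB_side _ Y hY
  · exact TBW_side Y hY
  · simp

/-- vertical topplings of the second family -/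
def V2 (P : Par) (t I J : ℤ) (X Y : ℕ) : Bool :=
  hit (d2 (P.t2 I J X Y) && P.f2 I J (P.t2 I J X Y)) (P.t2 I J X Y) (clk (P.e2 t I J))

theorem V2_zero {P : Par} {t I J : ℤ} {X Y : ℕ}
    (h : P.t2 I J X Y = 0 ∨ d2 (P.t2 I J X Y) = false) : P.V2 t I J X Y = false := by
  unfold V2
  rcases h with h | h
  · rw [h, hit_zero]
  · rw [h, Bool.false_and]; simp [hit]

theorem V2_wrap (P : Par) (t I J : ℤ) {X : ℕ} (hX : X ≤ 17) :
    P.V2 t I J X 17 = P.V2 t I (J + 1) X 1 ∧ P.V2 t I J X 16 = P.V2 t I (J + 1) X 0 := by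
  by_cases hJ : J < P.n
  · have ht : P.t2 I J = TB (P.gs I J) := by unfold t2; rw [if_pos hJ]
    by_cases h7 : X = 7
    · subst h7
      have hu : P.t2 I (J+1) 7 0 = 1 ∧ P.t2 I (J+1) 7 1 = 2 := by
        unfold t2
        by_cases h1 : J + 1 < P.n
        · rw [if_pos h1]; exact ⟨(TB_edge7 _).1, (TB_edge7 _).2.1⟩
        · rw [if_neg h1, if_pos (by omega)]; exact TBW_edge7
      have hl := TB_edge7 (P.gs I J)
      have he : P.e2 t I (J + 1) = P.e2 t I J - 32 := by unfold e2; ring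
      unfold V2
      rw [hu.1, hu.2, ht, hl.2.2.1, hl.2.2.2, he]
      constructor
      · exact hit_shift _ 2 _ (by norm_num) (by norm_num)
      · exact hit_shift _ 1 _ (by norm_num) (by norm_num)
    · have hu : P.t2 I (J+1) X 0 = 0 ∧ P.t2 I (J+1) X 1 = 0 := by
        unfold t2
        by_cases h1 : J + 1 < P.n
        · rw [if_pos h1]; exact ⟨(TB_edge _ X hX h7).1, (TB_edge _ X hX h7).2.1⟩
        · rw [if_neg h1, if_pos (by omega)]; exact TBW_edge X hX h7
      have hl := TB_edge (P.gs I J) X hX h7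
      rw [V2_zero (Or.inl hu.1), V2_zero (Or.inl hu.2), V2_zero, V2_zero]
      · exact ⟨rfl, rfl⟩
      · rw [ht]; exact hl.2.2.1
      · rw [ht]; exact Or.inl hl.2.2.2
  · have hu : ∀ Y, P.t2 I (J+1) X Y = 0 := by
      intro Y
      unfold t2; rw [if_neg (by omega), if_neg (by omega)]
    have hl : P.t2 I J X 16 = 0 ∧ P.t2 I J X 17 = 0 := by
      unfold t2; rw [if_neg hJ]
      split_ifs
      · exact TBW_edge' X hX
      · simp
    rw [V2_zero (Or.inl (hu 0)), V2_zero (Or.inl (hu 1)), V2_zero (Or.inl hl.1),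
      V2_zero (Or.inl hl.2)]
    exact ⟨rfl, rfl⟩

theorem eV_wrap (P : Par) (t I J : ℤ) {X : ℕ} (hX : X ≤ 17) :
    P.eV t I J X 17 = P.eV t I (J + 1) X 1 ∧ P.eV t I J X 16 = P.eV t I (J + 1) X 0 := by
  have h1 := t1_edge P J hX
  have h2 := t1_edge P (J + 1) hX
  have h3 := V2_wrap P t I J hX
  unfold V2 at h3
  unfold eV kV
  rw [h1.2.2.1, h1.2.2.2, h2.1, h2.2.1, hit_zero, hit_zero, h3.1, h3.2]
  exact ⟨rfl, rfl⟩

/-- horizontal topplings of the first family -/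
def H1 (P : Par) (t I J : ℤ) (X Y : ℕ) : Bool :=
  hit (!d1 (P.t1 J X Y) && P.f1 I J (P.t1 J X Y)) (P.t1 J X Y) (clk (P.e1 t I J))

theorem H1_zero {P : Par} {t I J : ℤ} {X Y : ℕ}
    (h : P.t1 J X Y = 0) : P.H1 t I J X Y = false := by
  unfold H1; rw [h, hit_zero]

theorem mf_wrapA (P : Par) (I J : ℤ) :
    mf (P.modeA I J) 16 47 = mf (P.modeA (I+1) J) 16 15 ∧
    mf (P.modeA I J) 16 46 = mf (P.modeA (I+1) J) 16 14 := by
  unfold modeA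
  split_ifs <;> first | omega | exact ⟨rfl, rfl⟩

theorem mf_wrapW (P : Par) (I : ℤ) :
    mf (P.modeW I) 20 38 = mf (P.modeW (I+1)) 20 6 ∧
    mf (P.modeW I) 20 37 = mf (P.modeW (I+1)) 20 5 := by
  unfold modeW
  split_ifs <;> first | omega | exact ⟨rfl, rfl⟩

theorem H1_wrap (P : Par) (t I J : ℤ) {Y : ℕ} (hY : Y ≤ 17) :
    P.H1 t I J 17 Y = P.H1 t (I + 1) J 1 Y ∧ P.H1 t I J 16 Y = P.H1 t (I + 1) J 0 Y := by
  have he : P.e1 t (I + 1) J = P.e1 t I J - 32 := by unfold e1; split_ifs <;> ring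
  by_cases hz : P.t1 J 0 Y = 0 ∧ P.t1 J 1 Y = 0 ∧ P.t1 J 16 Y = 0 ∧ P.t1 J 17 Y = 0
  · rw [H1_zero hz.1, H1_zero hz.2.1, H1_zero hz.2.2.1, H1_zero hz.2.2.2]
    exact ⟨rfl, rfl⟩
  by_cases hJ : J < P.n
  · have ht : P.t1 J = TA := by unfold t1; rw [if_pos hJ]
    have hf : ∀ I, P.f1 I J = mf (P.modeA I J) 16 := by intro I; unfold f1; rw [if_pos hJ]
    have h9 : Y = 9 := by
      by_contra h
      exact hz (by rw [ht]; exact TA_side Y hY h)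
    subst h9
    unfold H1
    rw [ht, hf, hf, he]
    have a1 : TA 17 9 = 15 + 32 := rfl
    have a2 : TA 16 9 = 14 + 32 := rfl
    have a3 : TA 1 9 = 15 := rfl
    have a4 : TA 0 9 = 14 := rfl
    have hm := mf_wrapA P I J
    rw [a1, a2, a3, a4, hit_shift _ 15 _ (by norm_num) (by norm_num),
      hit_shift _ 14 _ (by norm_num) (by norm_num), ← hm.1, ← hm.2]
    exact ⟨rfl, rfl⟩
  by_cases hJ' : J = P.n
  · have ht : P.t1 J = TW := by unfold t1; rw [if_neg hJ, if_pos hJ']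
    have hf : ∀ I, P.f1 I J = mf (P.modeW I) 20 := by
      intro I; unfold f1; rw [if_neg hJ, if_pos hJ']
    have h9 : Y = 4 := by
      by_contra h
      exact hz (by rw [ht]; exact TW_side Y hY h)
    subst h9
    unfold H1
    rw [ht, hf, hf, he]
    have a1 : TW 17 4 = 6 + 32 := rfl
    have a2 : TW 16 4 = 5 + 32 := rfl
    have a3 : TW 1 4 = 6 := rfl
    have a4 : TW 0 4 = 5 := rfl
    have hm := mf_wrapW P I
    rw [a1, a2, a3, a4, hit_shift _ 6 _ (by norm_num) (by norm_num),
      hit_shift _ 5 _ (by norm_num) (by norm_num), ← hm.1, ← hm.2]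
    exact ⟨rfl, rfl⟩
  · exfalso
    apply hz
    unfold t1; rw [if_neg hJ, if_neg hJ']; simp

theorem eH_wrap (P : Par) (t I J : ℤ) {Y : ℕ} (hY : Y ≤ 17) :
    P.eH t I J 17 Y = P.eH t (I + 1) J 1 Y ∧ P.eH t I J 16 Y = P.eH t (I + 1) J 0 Y := by
  have h1 := t2_side P I J hY
  have h2 := t2_side P (I + 1) J hY
  have h3 := H1_wrap P t I J hY
  unfold H1 at h3
  unfold eH kH
  rw [h1.2.2.1, h1.2.2.2, h2.1, h2.2.1, hit_zero, hit_zero, h3.1, h3.2]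
  exact ⟨rfl, rfl⟩

theorem lc_bd (x : ℤ) : 1 ≤ lc x ∧ lc x ≤ 16 := by unfold lc; omega

theorem lc_succ (x : ℤ) : (lc x ≤ 15 ∧ lc (x + 1) = lc x + 1 ∧ (x + 1) / 16 = x / 16) ∨
    (lc x = 16 ∧ lc (x + 1) = 1 ∧ (x + 1) / 16 = x / 16 + 1) := by unfold lc; omega

theorem lc_pred (x : ℤ) : (2 ≤ lc x ∧ lc (x - 1) = lc x - 1 ∧ (x - 1) / 16 = x / 16) ∨
    (lc x = 1 ∧ lc (x - 1) = 16 ∧ (x - 1) / 16 = x / 16 - 1) := by unfold lc; omega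

theorem gV_up (P : Par) (t x y : ℤ) :
    P.gV t x (y + 1) = P.eV t (x / 16) (y / 16) (lc x) (lc y + 1) := by
  have hx := lc_bd x
  unfold gV
  rcases lc_succ y with ⟨_, h2, h3⟩ | ⟨h1, h2, h3⟩
  · rw [h2, h3]
  · rw [h1, h2, h3, (eV_wrap P t _ _ (by omega)).1]

theorem gV_down (P : Par) (t x y : ℤ) :
    P.gV t x (y - 1) = P.eV t (x / 16) (y / 16) (lc x) (lc y - 1) := by
  have hx := lc_bd x
  unfold gV
  rcases lc_pred y with ⟨_, h2, h3⟩ | ⟨h1, h2, h3⟩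
  · rw [h2, h3]
  · rw [h1, h2, h3, (eV_wrap P t _ _ (by omega)).2]; simp

theorem gH_up (P : Par) (t x y : ℤ) :
    P.gH t (x + 1) y = P.eH t (x / 16) (y / 16) (lc x + 1) (lc y) := by
  have hx := lc_bd y
  unfold gH
  rcases lc_succ x with ⟨_, h2, h3⟩ | ⟨h1, h2, h3⟩
  · rw [h2, h3]
  · rw [h1, h2, h3, (eH_wrap P t _ _ (by omega)).1]

theorem gH_down (P : Par) (t x y : ℤ) :
    P.gH t (x - 1) y = P.eH t (x / 16) (y / 16) (lc x - 1) (lc y) := by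
  have hx := lc_bd y
  unfold gH
  rcases lc_pred x with ⟨_, h2, h3⟩ | ⟨h1, h2, h3⟩
  · rw [h2, h3]
  · rw [h1, h2, h3, (eH_wrap P t _ _ (by omega)).2]; simp

theorem tileOK_c1 {f1 f2 : ℕ → Bool} {t1 t2 : ℕ → ℕ → ℕ} {c2 base X Y : ℕ}
    (f1' : ℕ → Bool) :
    tileOK f1 f2 t1 t2 0 c2 base X Y = tileOK f1' f2 t1 t2 0 c2 base X Y := by
  apply tileOK_congr
  intro x y _
  have h0 : ∀ k f, hit f k 0 = false := by intro k f; simp [hit, Nat.blt]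
  have h1 : ∀ k f, nowb f k 0 = false := by intro k f; cases k <;> simp [nowb, Nat.blt]
  refine ⟨?_, ?_, ?_⟩ <;> simp only [kV, kH, kN, h0, h1]

theorem combo (P : Par) (I J : ℤ) (ga : Bool) :
    check2 (P.modeA I J) (P.sv I J) ga = true ∧
    (P.modeA I J ≠ 0 → check1 (P.modeA I J) (P.sv I J) ga = true) := by
  have h1 := check1_all
  have h2 := check2_all0
  have h3 := check2_all1
  simp only [Bool.and_eq_true] at h1 h2 h3
  unfold modeA sv
  cases ga <;> split_ifs <;> first | omega | simp [h1, h2, h3]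

theorem mf_zero (thr k : ℕ) : mf 0 thr k = false := rfl

theorem bf_same (g : Bool) : bf g g = fun _ => g := by
  funext k; unfold bf; cases Nat.blt k 14 <;> rfl

theorem row_ok {P : Par} (hP : P.Good) {t I J : ℤ} (ht : 0 ≤ t) (hJ : J < P.n) {X Y : ℕ}
    (hX : 1 ≤ X) (hX' : X ≤ 16) (hY : 1 ≤ Y) (hY' : Y ≤ 16) :
    tileOK (P.f1 I J) (P.f2 I J) (P.t1 J) (P.t2 I J) (clk (P.e1 t I J)) (clk (P.e2 t I J))
      (P.base I J X Y) X Y = true := by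
  have a1 : P.f1 I J = mf (P.modeA I J) 16 := by unfold f1; rw [if_pos hJ]
  have a2 : P.t1 J = TA := by unfold t1; rw [if_pos hJ]
  have a3 : P.t2 I J = TB (P.gs I J) := by unfold t2; rw [if_pos hJ]
  have a4 : P.base I J = rowBase (P.sv I J) (P.gs I J) := by unfold base; rw [if_pos hJ]
  have a5 : P.e1 t I J = t + 16 - 32 * I := by unfold e1; rw [if_pos hJ]
  obtain ⟨k2, k1⟩ := combo P I J (P.gs I J)
  have hs := hP.al_succ I J hJ
  rw [a1, a2, a3, a4]
  have hf2 : P.f2 I J = bf (P.al I J) (P.al I (J + 1)) := rfl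
  -- inactive column
  have inact : (P.al I J = false ∨ clk (P.e2 t I J) = 0) → ∀ f2' c1,
      tileOK (mf (P.modeA I J) 16) (P.f2 I J) TA (TB (P.gs I J)) c1
        (clk (P.e2 t I J)) (rowBase (P.sv I J) (P.gs I J) X Y) X Y =
      tileOK (mf (P.modeA I J) 16) f2' TA (TB (P.gs I J)) c1
        0 (rowBase (P.sv I J) (P.gs I J) X Y) X Y := by
    rintro (h | h) f2' c1
    · apply tileOK_f2
      rw [h, Bool.false_and] at hs
      intro k
      rw [hf2, h, hs, bf_same]
    · rw [h]; exact tileOK_c2 f2'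
  by_cases hact : P.al I J = false ∨ clk (P.e2 t I J) = 0
  · by_cases hm : P.modeA I J = 0
    · rw [inact hact (bf true (!P.gs I J || !(Nat.beq (P.modeA I J) 0))),
        tileOK_f1 64 (by intro k; rw [hm]; rfl)]
      exact check2_spec k2 hX hX' hY hY' (by omega)
    · rw [inact hact (fun _ => false)]
      refine check1_spec (k1 hm) hX hX' hY hY' (clk_le _) ?_
      intro h1
      have : I = 0 := by
        unfold modeA at h1
        split_ifs at h1
        · assumption
        · omega
      rw [a5]; unfold clk; omega
  · push Not at hact
    obtain ⟨hal, hc⟩ := hact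
    have hal : P.al I J = true := by simpa using hal
    have hI : 0 ≤ I := by
      by_contra h
      rw [hP.al_neg I J (by omega)] at hal
      exact absurd hal (by simp)
    have hf : P.f2 I J = bf true (!P.gs I J || !(Nat.beq (P.modeA I J) 0)) := by
      rw [hf2, hal, hs, hal, Bool.true_and]
      congr 2
      unfold modeA
      cases P.b J
      · rfl
      · rw [if_pos rfl, if_neg (by omega)]
        split_ifs <;> rfl
    rw [hf]
    by_cases hm : P.modeA I J = 0
    · rw [tileOK_f1 64 (by intro k; rw [hm]; rfl)]
      exact check2_spec k2 hX hX' hY hY' (clk_le _)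
    · have hb : P.b J = true := by
        by_contra h
        apply hm; unfold modeA; rw [if_neg h]
      have hJ0 : 0 ≤ J := by
        by_contra h
        rw [hP.b_neg J (by omega)] at hb
        exact absurd hb (by simp)
      have h64 : clk (P.e1 t I J) = 64 := by
        have := hP.Dlow I hI
        rw [a5]; unfold clk e2 at *; omega
      rw [h64]
      exact check2_spec k2 hX hX' hY hY' (clk_le _)

theorem top_ok {P : Par} (hP : P.Good) {t I : ℤ}
    (hl : P.has = true → t + 9 < P.D P.S + 32 * P.n + 32 * (P.m - P.S)) {X Y : ℕ}
    (hX : 1 ≤ X) (hX' : X ≤ 16) (hY : 1 ≤ Y) (hY' : Y ≤ 16) :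
    tileOK (P.f1 I P.n) (P.f2 I P.n) (P.t1 P.n) (P.t2 I P.n) (clk (P.e1 t I P.n))
      (clk (P.e2 t I P.n)) (P.base I P.n X Y) X Y = true := by
  have a1 : P.f1 I P.n = mf (P.modeW I) 20 := by unfold f1; rw [if_neg (lt_irrefl _), if_pos rfl]
  have a2 : P.t1 P.n = TW := by unfold t1; rw [if_neg (lt_irrefl _), if_pos rfl]
  have a3 : P.t2 I P.n = TBW := by unfold t2; rw [if_neg (lt_irrefl _), if_pos rfl]
  have a4 : P.base I P.n = topBase (decide (I = P.m)) := by
    unfold base; rw [if_neg (lt_irrefl _), if_pos rfl]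
  have a5 : P.e1 t I P.n = t + 16 - P.D P.S - 32 * P.n - 32 * (I - P.S) := by
    unfold e1; rw [if_neg (lt_irrefl _)]
  have a6 : P.f2 I P.n = fun _ => P.al I P.n := by
    unfold f2; rw [hP.al_top, bf_same]
  rw [a1, a2, a3, a4, a6]
  have idle : P.modeW I = 0 → P.al I P.n = false → tileOK (mf (P.modeW I) 20)
      (fun _ => P.al I P.n) TW TBW (clk (P.e1 t I P.n)) (clk (P.e2 t I P.n))
        (topBase (decide (I = P.m)) X Y) X Y = true := by
    intro h1 h2
    rw [h1, h2, tileOK_f2 (fun _ => false) (fun _ => rfl), tileOK_f1 (f1 := mf 0 20) 0 (fun _ => rfl),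
      tileOK_c1 (mf 2 20)]
    cases decide (I = P.m)
    · exact check4_spec hX hX' hY hY' (by omega)
    · exact check5_spec hX hX' hY hY' (by omega)
  cases hh : P.has with
  | false =>
    exact idle (by unfold modeW; rw [hh]; rfl) (hP.no_al hh I)
  | true =>
    have hl := hl hh
    rcases lt_trichotomy I P.S with h | h | h
    · exact idle (by unfold modeW; rw [hh]; simp [h]) (hP.S_min hh I h)
    · have hm : P.modeW I = 1 := by unfold modeW; rw [hh]; simp [h]
      have := hP.S_lt hh
      have hd : decide (I = P.m) = false := by simp; omega
      rw [hm, hd, h, hP.S_al hh]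
      have := check3_spec (X := X) (Y := Y) (P.e1 t I P.n).toNat hX hX' hY hY'
      have e : clk (P.e2 t P.S P.n) = min ((P.e1 t I P.n).toNat - 15) 64 := by
        rw [a5]; unfold clk e2; rw [h]; omega
      rw [e, ← h]; exact this
    · have hm : P.modeW I = 2 := by
        unfold modeW; rw [hh, if_pos rfl, if_neg (by omega), if_neg (by omega)]
      have hD := hP.S_D hh I h
      have hS := hP.S_nonneg hh
      have e : clk (P.e2 t I P.n) = 0 := by
        unfold clk e2; omega
      rw [hm, e, tileOK_c2 (fun _ => false)]
      by_cases hI : I = P.m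
      · have hd : decide (I = P.m) = true := by simpa using hI
        rw [hd]
        refine check5_spec hX hX' hY hY' ?_
        rw [a5]; unfold clk; omega
      · have hd : decide (I = P.m) = false := by simpa using hI
        rw [hd]
        exact check4_spec hX hX' hY hY' (clk_le _)

theorem all_ok {P : Par} (hP : P.Good) {t I J : ℤ} (ht : 0 ≤ t)
    (hl : P.has = true → t + 9 < P.D P.S + 32 * P.n + 32 * (P.m - P.S)) {X Y : ℕ}
    (hX : 1 ≤ X) (hX' : X ≤ 16) (hY : 1 ≤ Y) (hY' : Y ≤ 16) :
    tileOK (P.f1 I J) (P.f2 I J) (P.t1 J) (P.t2 I J) (clk (P.e1 t I J))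
      (clk (P.e2 t I J)) (P.base I J X Y) X Y = true := by
  rcases lt_trichotomy J P.n with h | h | h
  · exact row_ok hP ht h hX hX' hY hY'
  · subst h; exact top_ok hP hl hX hX' hY hY'
  · have a2 : P.t1 J = fun _ _ => 0 := by
      unfold t1; rw [if_neg (by omega), if_neg (by omega)]
    have a3 : P.t2 I J = fun _ _ => 0 := by
      unfold t2; rw [if_neg (by omega), if_neg (by omega)]
    have a4 : P.base I J = fun _ _ => 0 := by
      unfold base; rw [if_neg (by omega), if_neg (by omega)]
    rw [a2, a3, a4]
    simp only [tileOK, kV, kH, kN, hit_zero, nowb_zero]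
    rfl

theorem C_spec {P : Par} (hP : P.Good) {t : ℤ} (ht : 0 ≤ t)
    (hl : P.has = true → t + 9 < P.D P.S + 32 * P.n + 32 * (P.m - P.S)) (x y : ℤ) :
    2 * (P.gV t x y + P.gH t x y) ≤ P.base (x / 16) (y / 16) (lc x) (lc y)
    + P.gV t x (y + 1) + P.gV t x (y - 1)
    + P.gH t (x + 1) y + P.gH t (x - 1) y ∧
    (if 4 ≤ P.C t (x, y) then 1 else 0) = P.gN t x y := by
  have hx := lc_bd x
  have hy := lc_bd y
  have h := all_ok hP (I := x / 16) (J := y / 16) ht hl hx.1 hx.2 hy.1 hy.2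
  unfold C
  simp only []
  rw [gV_up, gV_down, gH_up, gH_down]
  unfold tileOK condOK at h
  simp only [Bool.and_eq_true, Nat.ble_eq] at h
  obtain ⟨h1, h2⟩ := h
  refine ⟨h1, ?_⟩
  change _ = kN _ _ _ _ _ _ _ _
  split_ifs with h3
  · have h4 : ∀ p q k : ℕ, q ≤ p → 4 ≤ p - q →
      (bif Nat.ble (q + 4) p then Nat.beq k 1 else Nat.beq k 0) = true → 1 = k := by
      intro p q k h5 h6 h7
      have : Nat.ble (q + 4) p = true := by rw [Nat.ble_eq]; omega
      rw [this] at h7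
      exact (Nat.eq_of_beq_eq_true h7).symm
    exact h4 _ _ _ h1 h3 h2
  · have h4 : ∀ p q k : ℕ, q ≤ p → ¬ (4 ≤ p - q) →
      (bif Nat.ble (q + 4) p then Nat.beq k 1 else Nat.beq k 0) = true → 0 = k := by
      intro p q k h5 h6 h7
      have : Nat.ble (q + 4) p = false := by rw [Bool.eq_false_iff, Ne, Nat.ble_eq]; omega
      rw [this] at h7
      exact (Nat.eq_of_beq_eq_true h7).symm
    exact h4 _ _ _ h1 h3 h2

theorem gV_succ {P : Par} (hP : P.Good) (t x y : ℤ) :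
    P.gV (t + 1) x y = P.gV t x y + if t % 8 < 4 then P.gN t x y else 0 :=
  eV_succ hP t _ _ (by have := lc_bd x; omega) (by have := lc_bd y; omega)

theorem gH_succ {P : Par} (hP : P.Good) (t x y : ℤ) :
    P.gH (t + 1) x y = P.gH t x y + if t % 8 < 4 then 0 else P.gN t x y :=
  eH_succ hP t _ _ (by have := lc_bd x; omega) (by have := lc_bd y; omega)

theorem C_step {P : Par} (hP : P.Good) {t : ℤ} (ht : 0 ≤ t)
    (hl : P.has = true → t + 9 < P.D P.S + 32 * P.n + 32 * (P.m - P.S)) :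
    P.C (t + 1) = if t % 8 < 4 then Vstep (P.C t) else Hstep (P.C t) := by
  have hs := fun x y => C_spec hP ht hl x y
  split_ifs with h8
  · funext v
    obtain ⟨x, y⟩ := v
    have h0 := hs x y
    unfold Vstep
    simp only [Prod.mk_sub_mk, Prod.mk_add_mk, sub_zero, add_zero]
    rw [(hs x (y - 1)).2, (hs x (y + 1)).2]
    have h1 := h0.1
    have h2 := h0.2
    rw [h2]
    unfold C at h2 ⊢
    simp only [gV_succ hP, gH_succ hP, h8, if_true, add_zero] at h2 ⊢
    split_ifs at h2 <;> omega
  · funext v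
    obtain ⟨x, y⟩ := v
    have h0 := hs x y
    unfold Hstep
    simp only [Prod.mk_sub_mk, Prod.mk_add_mk, sub_zero, add_zero]
    rw [(hs (x - 1) y).2, (hs (x + 1) y).2]
    have h1 := h0.1
    have h2 := h0.2
    rw [h2]
    unfold C at h2 ⊢
    simp only [gV_succ hP, gH_succ hP, h8, if_false, add_zero] at h2 ⊢
    split_ifs at h2 <;> omega

theorem letter_at (t : ℕ) : (wV4H4.getD (t % wV4H4.length) Letter.H).step
    = if (t : ℤ) % 8 < 4 then Vstep else Hstep := by
  have h : t % wV4H4.length < 8 := Nat.mod_lt _ (by decide)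
  have h' : ((t : ℤ) % 8) = ((t % wV4H4.length : ℕ) : ℤ) := by
    have : wV4H4.length = 8 := rfl
    rw [this]; omega
  rw [h']
  generalize t % wV4H4.length = r at *
  interval_cases r <;> rfl

theorem run_eq {P : Par} (hP : P.Good) (t : ℕ)
    (hl : P.has = true → (t : ℤ) + 8 < P.D P.S + 32 * P.n + 32 * (P.m - P.S)) :
    runPeriodic wV4H4 (P.C 0) t = P.C t := by
  induction t with
  | zero => rfl
  | succ t ih =>
    have hl' : P.has = true → (t : ℤ) + 9 < P.D P.S + 32 * P.n + 32 * (P.m - P.S) := by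
      intro h; have := hl h; push_cast at this; omega
    have := ih (fun h => by have := hl' h; omega)
    change (wV4H4.getD (t % wV4H4.length) Letter.H).step (runPeriodic wV4H4 (P.C 0) t) = _
    rw [this, letter_at]
    push_cast
    rw [C_step hP (by omega) hl']
    split_ifs <;> rfl

theorem C_out (P : Par) (t : ℤ) :
    P.C t (16 * P.m + 1, 16 * P.n + 3) =
      (hit (mf (P.modeW P.m) 20 6) 6 (clk (P.e1 t P.m P.n))).toNat
      - 2 * (hit (mf (P.modeW P.m) 20 7) 7 (clk (P.e1 t P.m P.n))).toNat := by
  have x1 : (16 * P.m + 1) / 16 = P.m := by omega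
  have y1 : (16 * P.n + 3) / 16 = P.n := by omega
  have x2 : lc (16 * P.m + 1) = 2 := by unfold lc; omega
  have y2 : lc (16 * P.n + 3) = 4 := by unfold lc; omega
  have a1 : P.f1 P.m P.n = mf (P.modeW P.m) 20 := by
    unfold f1; rw [if_neg (lt_irrefl _), if_pos rfl]
  have a2 : P.t1 P.n = TW := by unfold t1; rw [if_neg (lt_irrefl _), if_pos rfl]
  have a3 : P.t2 P.m P.n = TBW := by unfold t2; rw [if_neg (lt_irrefl _), if_pos rfl]
  have a4 : P.base P.m P.n = topBase true := by
    unfold base; rw [if_neg (lt_irrefl _), if_pos rfl]; simp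
  unfold C
  simp only []
  rw [gV_up, gV_down, gH_up, gH_down]
  unfold gV gH
  rw [x1, y1, x2, y2, a4]
  unfold eV eH kV kH
  rw [a1, a2, a3]
  have w1 : TW 2 5 = 0 := rfl
  have w2 : TW 2 3 = 0 := rfl
  have w3 : TW 3 4 = 8 := rfl
  have w4 : TW 1 4 = 6 := rfl
  have w5 : TW 2 4 = 7 := rfl
  have v1 : TBW 2 5 = 0 := rfl
  have v2 : TBW 2 3 = 0 := rfl
  have v3 : TBW 3 4 = 0 := rfl
  have v4 : TBW 1 4 = 0 := rfl
  have v5 : TBW 2 4 = 0 := rfl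
  have k6 : d1 6 = false := rfl
  have k7 : d1 7 = false := rfl
  have k8 : d1 8 = true := rfl
  have hb : topBase true 2 4 = 0 := rfl
  have hf : ∀ k c, hit false k c = false := by intro k c; simp [hit]
  norm_num only [w1, w2, w3, w4, w5, v1, v2, v3, v4, v5]
  simp only [hit_zero, k6, k7, k8, hb, Bool.not_false, Bool.not_true, Bool.true_and,
    Bool.false_and, hf, Bool.toNat_false, zero_add, add_zero]

theorem C_out_no {P : Par} (h : P.has = false) (t : ℤ) :
    P.C t (16 * P.m + 1, 16 * P.n + 3) = 0 := by
  have hm : P.modeW P.m = 0 := by unfold modeW; rw [h]; simp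
  rw [C_out, hm, mf_zero, mf_zero]
  simp [hit]

theorem C_out_yes {P : Par} (hP : P.Good) (h : P.has = true) :
    P.C (P.D P.S + 32 * P.n + 32 * (P.m - P.S) - 9) (16 * P.m + 1, 16 * P.n + 3) = 1 := by
  have hS := hP.S_lt h
  have hm : P.modeW P.m = 2 := by
    unfold modeW; rw [h, if_pos rfl, if_neg (by omega), if_neg (by omega)]
  have he : clk (P.e1 (P.D P.S + 32 * P.n + 32 * (P.m - P.S) - 9) P.m P.n) = 7 := by
    unfold e1; rw [if_neg (lt_irrefl _)]; unfold clk; omega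
  rw [C_out, hm, he]
  rfl

theorem C_out_zero {P : Par} (hP : P.Good) : P.C 0 (16 * P.m + 1, 16 * P.n + 3) = 0 := by
  cases h : P.has with
  | false => exact C_out_no h 0
  | true =>
    have hS := hP.S_lt h
    have hS0 := hP.S_nonneg h
    have hD := hP.Dlow P.S hS0
    have hn := hP.n_nonneg
    have he : clk (P.e1 0 P.m P.n) = 0 := by
      unfold e1; rw [if_neg (lt_irrefl _)]; unfold clk; omega
    have h0 : ∀ k f, hit f k 0 = false := by intro k f; simp [hit, Nat.blt]
    rw [C_out, he, h0, h0]; rfl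

/-- at time zero the first family has not fired -/
theorem hit1_zero {P : Par} (hP : P.Good) (I J : ℤ) (d : Bool) (tab : ℕ) :
    hit (d && P.f1 I J tab) tab (clk (P.e1 0 I J)) = false := by
  rw [Bool.eq_false_iff]
  intro h
  simp only [hit, Bool.and_eq_true, blt_iff] at h
  obtain ⟨h1, h2, -, h3⟩ := h
  unfold f1 at h3
  unfold e1 at h2
  by_cases hJ : J < P.n
  · rw [if_pos hJ] at h3 h2
    unfold modeA at h3
    split_ifs at h3
    · simp [mf] at h3
    · have : Nat.ble 16 tab = true := h3
      rw [Nat.ble_eq] at this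
      unfold clk at h2; omega
    · unfold clk at h2; omega
    · simp [mf] at h3
  · rw [if_neg hJ] at h3 h2
    by_cases hJ' : J = P.n
    · rw [if_pos hJ'] at h3
      cases hh : P.has with
      | false =>
        have : P.modeW I = 0 := by unfold modeW; rw [hh]; simp
        rw [this, mf_zero] at h3
        exact absurd h3 (by simp)
      | true =>
        have hS0 := hP.S_nonneg hh
        have hD := hP.Dlow P.S hS0
        have hn := hP.n_nonneg
        by_cases hI : I < P.S
        · have : P.modeW I = 0 := by unfold modeW; rw [hh]; simp [hI]
          rw [this, mf_zero] at h3
          exact absurd h3 (by simp)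
        · unfold clk at h2; omega
    · rw [if_neg hJ'] at h3
      exact absurd h3 (by simp)

theorem hit_congr {f f' : Bool} {tab c : ℕ} (h : tab < c → f = f') : hit f tab c = hit f' tab c := by
  unfold hit
  by_cases h1 : tab < c
  · rw [h h1]
  · have : Nat.blt tab c = false := by rw [Bool.eq_false_iff, Ne, blt_iff]; exact h1
    rw [this, Bool.false_and, Bool.false_and]

/-- at time zero the second family is known -/
theorem hit2_zero {P : Par} (hP : P.Good) (I J : ℤ) (d : Bool) (tab : ℕ) :
    hit (d && P.f2 I J tab) tab (clk (P.e2 0 I J))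
      = hit (d && decide (0 ≤ I)) tab (clk (1 - P.D I - 32 * J)) := by
  have he : P.e2 0 I J = 1 - P.D I - 32 * J := by unfold e2; ring
  rw [he]
  apply hit_congr
  intro hc
  congr 1
  unfold f2
  by_cases hI : 0 ≤ I
  · have hD := hP.Dlow I hI
    have hJ : J < 0 := by unfold clk at hc; omega
    rw [hP.al_low I J hI (by omega), hP.al_low I (J + 1) hI (by omega), bf_same]
    simp [hI]
  · rw [hP.al_neg I J (by omega), hP.al_neg I (J + 1) (by omega), bf_same]
    simp [hI]

theorem eVH_zero {P Q : Par} (hP : P.Good) (hQ : Q.Good) (hn : P.n = Q.n)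
    (hg : P.gs = Q.gs) (hD : P.D = Q.D) (I J : ℤ) (X Y : ℕ) :
    P.eV 0 I J X Y = Q.eV 0 I J X Y ∧ P.eH 0 I J X Y = Q.eH 0 I J X Y := by
  have ht : P.t2 = Q.t2 := by unfold t2; rw [hn, hg]
  unfold eV eH kV kH
  rw [hit1_zero hP, hit1_zero hP, hit1_zero hQ, hit1_zero hQ, hit2_zero hP, hit2_zero hP,
    hit2_zero hQ, hit2_zero hQ, ht, hD]
  exact ⟨rfl, rfl⟩

theorem base_diff {P Q : Par} (hn : P.n = Q.n) (hm : P.m = Q.m)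
    (hg : P.gs = Q.gs) (hb : ∀ J, Q.b J = false) (I J : ℤ) (X Y : ℕ) :
    P.base I J X Y = Q.base I J X Y +
      if I = 0 ∧ J < P.n ∧ X = 2 ∧ Y = 9 ∧ P.b J = true then 4 else 0 := by
  unfold base
  rw [← hn, ← hm, ← hg]
  by_cases hJ : J < P.n
  · rw [if_pos hJ, if_pos hJ]
    unfold rowBase sv
    by_cases hXY : X = 2 ∧ Y = 9
    · obtain ⟨rfl, rfl⟩ := hXY
      by_cases hI : I = 0
      · cases h : P.b J <;> simp [hI, hb, hJ, h]
      · simp [hI]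
    · have hc : (Nat.beq X 2 && Nat.beq Y 9) = false := by
        rw [Bool.eq_false_iff, Ne, Bool.and_eq_true, Nat.beq_eq, Nat.beq_eq]; exact hXY
      have hno : ¬ (I = 0 ∧ J < P.n ∧ X = 2 ∧ Y = 9 ∧ P.b J = true) := by tauto
      rw [if_neg hno, hc]; rfl
  · have hno : ¬ (I = 0 ∧ J < P.n ∧ X = 2 ∧ Y = 9 ∧ P.b J = true) := by tauto
    rw [if_neg hJ, if_neg hJ, if_neg hno, add_zero]

theorem C_zero {P Q : Par} (hP : P.Good) (hQ : Q.Good) (hn : P.n = Q.n) (hm : P.m = Q.m)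
    (hg : P.gs = Q.gs) (hD : P.D = Q.D) (hb : ∀ J, Q.b J = false) (x y : ℤ) :
    P.C 0 (x, y) = Q.C 0 (x, y) +
      if x / 16 = 0 ∧ y / 16 < P.n ∧ lc x = 2 ∧ lc y = 9 ∧ P.b (y / 16) = true then 4 else 0 := by
  have hV : ∀ x y, P.gV 0 x y = Q.gV 0 x y := fun x y => (eVH_zero hP hQ hn hg hD _ _ _ _).1
  have hH : ∀ x y, P.gH 0 x y = Q.gH 0 x y := fun x y => (eVH_zero hP hQ hn hg hD _ _ _ _).2
  have hl : Q.has = true → (0 : ℤ) + 9 < Q.D Q.S + 32 * Q.n + 32 * (Q.m - Q.S) := by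
    intro h
    have hS := hQ.S_lt h
    have hS0 := hQ.S_nonneg h
    have hD := hQ.Dlow Q.S hS0
    have hn := hQ.n_nonneg
    omega
  have h := (C_spec hQ le_rfl hl x y).1
  unfold C
  simp only [hV, hH]
  rw [base_diff hn hm hg hb]
  omega

/-- The light cone. -/
theorem light_cone (w : List Letter) (c c' : ℤ × ℤ → ℕ) (t : ℕ) : ∀ v : ℤ × ℤ,
    (∀ u : ℤ × ℤ, |u.1 - v.1| ≤ t → |u.2 - v.2| ≤ t → c u = c' u) →
    runPeriodic w c t v = runPeriodic w c' t v := by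
  induction t with
  | zero =>
    intro v h
    exact h v (by simp) (by simp)
  | succ t ih =>
    intro v h
    have key : ∀ a b : ℤ, |a| ≤ 1 → |b| ≤ 1 →
        runPeriodic w c t (v + (a, b)) = runPeriodic w c' t (v + (a, b)) := by
      intro a b ha hb
      apply ih
      intro u h1 h2
      apply h u
      · rw [abs_le] at *; simp only [Prod.fst_add] at h1; push_cast; omega
      · rw [abs_le] at *; simp only [Prod.snd_add] at h2; push_cast; omega
    have k0 := key 0 0 (by simp) (by simp)
    have k1 := key 1 0 (by simp) (by simp)
    have k2 := key (-1) 0 (by simp) (by simp)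
    have k3 := key 0 1 (by simp) (by simp)
    have k4 := key 0 (-1) (by simp) (by simp)
    have e0 : v + (0, 0) = v := by ext <;> simp
    have e2 : v + (-1, 0) = v - (1, 0) := by ext <;> simp <;> ring
    have e4 : v + (0, -1) = v - (0, 1) := by ext <;> simp <;> ring
    rw [e0] at k0
    rw [e2] at k2
    rw [e4] at k4
    change (w.getD (t % w.length) Letter.H).step (runPeriodic w c t) v
      = (w.getD (t % w.length) Letter.H).step (runPeriodic w c' t) v
    cases w.getD (t % w.length) Letter.H
    · simp only [Letter.step, Hstep, k0, k1, k2]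
    · simp only [Letter.step, Vstep, k0, k3, k4]

/-- the column of index `s` is compatible with the input -/
def fits {n : ℕ} (g : ℕ → Fin n → Bool) (b : Fin n → Bool) (s : ℕ) : Prop :=
  ∀ k, g s k = true → b k = true

open Classical in
/-- The layout for a monotone function, given by a list of terms. -/
noncomputable def mk' {n : ℕ} (f : (Fin n → Bool) → Bool) (g : ℕ → Fin n → Bool) (M : ℕ)
    (b : Fin n → Bool) : Par where
  n := n
  m := M
  b := fun J => if h : 0 ≤ J ∧ J < n then b ⟨J.toNat, by omega⟩ else false
  gs := fun I J => if h : 0 ≤ J ∧ J < n then g I.toNat ⟨J.toNat, by omega⟩ else false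
  al := fun I J => decide (0 ≤ I ∧ ∀ k : Fin n, ((k : ℕ) : ℤ) < J → g I.toNat k = true → b k = true)
  D := fun I => 32 * ((I + 1) * (M + 2))
  has := f b
  S := if h : ∃ s, fits g b s then (Nat.find h : ℤ) else 0

theorem mk_good {n : ℕ} (f : (Fin n → Bool) → Bool) (hf : Monotone f)
    (g : ℕ → Fin n → Bool) (M : ℕ) (hg : ∀ s, f (g s) = true)
    (hM : ∀ b, f b = true → ∃ s < M, g s = b) (b : Fin n → Bool) :
    (mk' f g M b).Good := by
  classical
  have hfit : ∀ s, fits g b s → f b = true := by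
    intro s hs
    have h1 : g s ≤ b := by
      intro k
      have := hs k
      cases h : g s k
      · exact Bool.false_le _
      · rw [this h]
    have h2 := hf h1
    rw [hg s] at h2
    cases h : f b
    · rw [h] at h2; exact absurd h2 (by decide)
    · rfl
  have hex : f b = true → ∃ s < M, fits g b s := by
    intro h
    obtain ⟨s, h1, h2⟩ := hM b h
    exact ⟨s, h1, fun k hk => by rw [← h2]; exact hk⟩
  have hal : ∀ I, (mk' f g M b).al I n = true ↔ 0 ≤ I ∧ fits g b I.toNat := by
    intro I
    simp only [mk', decide_eq_true_eq, fits]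
    refine and_congr Iff.rfl (forall_congr' fun k => ?_)
    have : ((k : ℕ) : ℤ) < n := by have := k.2; omega
    simp [this]
  constructor
  case al_neg =>
    intro I J h
    simp only [mk', decide_eq_false_iff_not]
    omega
  case al_succ =>
    intro I J hJ
    simp only [mk'] at hJ ⊢
    rw [Bool.eq_iff_iff]
    simp only [Bool.and_eq_true, Bool.or_eq_true, decide_eq_true_eq, Bool.not_eq_true']
    by_cases h : 0 ≤ J ∧ J < n
    · rw [dif_pos h, dif_pos h]
      constructor
      · rintro ⟨h1, h2⟩
        refine ⟨⟨h1, fun k hk => h2 k (by omega)⟩, ?_⟩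
        have := h2 ⟨J.toNat, by omega⟩ (by simp only []; omega)
        cases hh : g I.toNat ⟨J.toNat, by omega⟩
        · exact Or.inl rfl
        · exact Or.inr (this hh)
      · rintro ⟨⟨h1, h2⟩, h3⟩
        refine ⟨h1, fun k hk hgk => ?_⟩
        by_cases hkJ : ((k : ℕ) : ℤ) < J
        · exact h2 k hkJ hgk
        · have : k = ⟨J.toNat, by omega⟩ := by apply Fin.ext; simp only []; omega
          rw [this] at hgk ⊢
          rcases h3 with h3 | h3
          · rw [h3] at hgk; exact absurd hgk (by simp)
          · exact h3
    · rw [dif_neg h, dif_neg h]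
      constructor
      · rintro ⟨h1, h2⟩
        exact ⟨⟨h1, fun k hk => h2 k (by omega)⟩, Or.inl rfl⟩
      · rintro ⟨⟨h1, h2⟩, -⟩
        exact ⟨h1, fun k hk => h2 k (by omega)⟩
  case al_top =>
    intro I
    simp only [mk']
    rw [Bool.eq_iff_iff]
    simp only [decide_eq_true_eq]
    refine and_congr Iff.rfl (forall_congr' fun k => ?_)
    have h1 : ((k : ℕ) : ℤ) < n := by have := k.2; omega
    have h2 : ((k : ℕ) : ℤ) < n + 1 := by omega
    simp [h1, h2]
  case al_low =>
    intro I J hI hJ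
    simp only [mk', decide_eq_true_eq]
    exact ⟨hI, fun k hk => by omega⟩
  case b_neg =>
    intro J hJ
    simp only [mk']
    rw [dif_neg (by omega)]
  case D8 => intro I; simp only [mk']; omega
  case Dlow =>
    intro I hI
    simp only [mk']
    have : (0 : ℤ) ≤ M := by omega
    nlinarith
  case n_nonneg => simp only [mk']; omega
  case S_nonneg => intro _; simp only [mk']; split_ifs <;> omega
  case S_lt =>
    intro h
    obtain ⟨s, h1, h2⟩ := hex h
    have he : ∃ s, fits g b s := ⟨s, h2⟩
    simp only [mk']
    rw [dif_pos he]
    have := Nat.find_min' he h2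
    omega
  case S_al =>
    intro h
    obtain ⟨s, h1, h2⟩ := hex h
    have he : ∃ s, fits g b s := ⟨s, h2⟩
    rw [show (mk' f g M b).n = n from rfl, hal]
    simp only [mk']
    rw [dif_pos he]
    exact ⟨by omega, by simpa using Nat.find_spec he⟩
  case S_min =>
    intro h I hI
    obtain ⟨s, h1, h2⟩ := hex h
    have he : ∃ s, fits g b s := ⟨s, h2⟩
    rw [show (mk' f g M b).n = n from rfl, Bool.eq_false_iff, Ne, hal]
    rintro ⟨h3, h4⟩
    simp only [mk'] at hI
    rw [dif_pos he] at hI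
    exact Nat.find_min he (m := I.toNat) (by omega) h4
  case S_D =>
    intro _ I hI
    simp only [mk'] at hI ⊢
    generalize (if h : ∃ s, fits g b s then (Nat.find h : ℤ) else 0) = S at *
    have : (0 : ℤ) ≤ M := by omega
    nlinarith
  case no_al =>
    intro h I
    rw [show (mk' f g M b).n = n from rfl, Bool.eq_false_iff, Ne, hal]
    rintro ⟨h3, h4⟩
    have h5 := hfit _ h4
    have h6 : f b = false := h
    rw [h5] at h6
    exact absurd h6 (by simp)

/-- the input sum -/
theorem input_sum {n : ℕ} (f : (Fin n → Bool) → Bool) (g : ℕ → Fin n → Bool) (M : ℕ)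
    (b : Fin n → Bool) (x y : ℤ) :
    ∑ k : Fin n, 4 * bnum (b k) * delta (1, 16 * ((k : ℕ) : ℤ) + 8) (x, y)
      = if x / 16 = 0 ∧ y / 16 < (mk' f g M b).n ∧ lc x = 2 ∧ lc y = 9
          ∧ (mk' f g M b).b (y / 16) = true then 4 else 0 := by
  by_cases h : x = 1 ∧ y % 16 = 8 ∧ 0 ≤ y / 16 ∧ y / 16 < n
  · obtain ⟨h1, h2, h3, h4⟩ := h
    rw [Finset.sum_eq_single ⟨(y / 16).toNat, by omega⟩]
    · have e1 : delta (1, 16 * (((y / 16).toNat : ℕ) : ℤ) + 8) (x, y) = 1 := by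
        unfold delta; rw [if_pos]; ext
        · exact h1
        · simp only []; omega
      simp only [e1, mk', dif_pos (And.intro h3 h4)]
      have e2 : x / 16 = 0 := by omega
      have e3 : lc x = 2 := by unfold lc; omega
      have e4 : lc y = 9 := by unfold lc; omega
      simp only [e2, e3, e4, h4, true_and]
      unfold bnum
      split_ifs <;> rfl
    · intro k _ hk
      have : delta (1, 16 * ((k : ℕ) : ℤ) + 8) (x, y) = 0 := by
        unfold delta; rw [if_neg]
        intro h5
        apply hk
        apply Fin.ext
        simp only [Prod.mk.injEq] at h5
        simp only []; omega
      rw [this, mul_zero]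
    · intro h; exact absurd (Finset.mem_univ _) h
  · rw [if_neg]
    · apply Finset.sum_eq_zero
      intro k _
      have : delta (1, 16 * ((k : ℕ) : ℤ) + 8) (x, y) = 0 := by
        unfold delta; rw [if_neg]
        intro h5
        apply h
        have := k.2
        simp only [Prod.mk.injEq] at h5
        omega
      rw [this, mul_zero]
    · rintro ⟨h1, h2, h3, h4, h5⟩
      apply h
      have h6 : 0 ≤ y / 16 := by
        by_contra h7
        simp only [mk'] at h5
        rw [dif_neg (by omega)] at h5
        exact absurd h5 (by simp)
      have h7 : y / 16 < n := h2
      unfold lc at h3 h4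
      omega

theorem main_case {n : ℕ} (f : (Fin n → Bool) → Bool) (hf : Monotone f) (hx : ∃ x, f x = true) :
    ∃ (T : ℕ) (c : ℤ × ℤ → ℕ) (i : Fin n → ℤ × ℤ) (o : ℤ × ℤ),
      1 ≤ T ∧ (Function.support c).Finite ∧
      Function.Injective i ∧ (∀ k : Fin n, i k ≠ o) ∧ c o = 0 ∧
      ∀ b : Fin n → Bool,
        (∃ t ≤ T, 0 < runPeriodic wV4H4
            (fun v => c v + ∑ k : Fin n, 4 * bnum (b k) * delta (i k) v) t o)
        ↔ f b = true := by
  classical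
  obtain ⟨x0, hx0⟩ := hx
  -- a list of all true points
  obtain ⟨g, M, hg, hM⟩ : ∃ (g : ℕ → Fin n → Bool) (M : ℕ), (∀ s, f (g s) = true) ∧
      ∀ b, f b = true → ∃ s < M, g s = b := by
    let e := Fintype.equivFin (Fin n → Bool)
    refine ⟨fun s => if h : s < Fintype.card (Fin n → Bool) then
      (if f (e.symm ⟨s, h⟩) = true then e.symm ⟨s, h⟩ else x0) else x0,
      Fintype.card (Fin n → Bool), ?_, ?_⟩
    · intro s
      simp only []
      split_ifs <;> assumption
    · intro b hb
      refine ⟨e b, (e b).2, ?_⟩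
      simp only [Fin.is_lt, dif_pos, Fin.eta, Equiv.symm_apply_apply, hb, if_true]
  let Q := mk' f g M (fun _ => false)
  have hQ : Q.Good := mk_good f hf g M hg hM _
  have hQb : ∀ J, Q.b J = false := by
    intro J
    change (if h : 0 ≤ J ∧ J < n then false else false) = false
    simp
  let T : ℕ := 32 * ((M + 1) * (M + 2)) + 32 * n + 32 * M + 1
  let o : ℤ × ℤ := (16 * (M : ℤ) + 1, 16 * (n : ℤ) + 3)
  let c : ℤ × ℤ → ℕ := fun v => if |v.1 - o.1| ≤ T ∧ |v.2 - o.2| ≤ T then Q.C 0 v else 0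
  have hrun : ∀ b, ∀ t ≤ T, runPeriodic wV4H4
      (fun v => c v + ∑ k : Fin n, 4 * bnum (b k) * delta (1, 16 * ((k : ℕ) : ℤ) + 8) v) t o
      = runPeriodic wV4H4 ((mk' f g M b).C 0) t o := by
    intro b t ht
    apply light_cone
    rintro ⟨x, y⟩ h1 h2
    have hc : c (x, y) = Q.C 0 (x, y) := by
      simp only [c]
      rw [if_pos]
      constructor
      · exact h1.trans (by exact_mod_cast ht)
      · exact h2.trans (by exact_mod_cast ht)
    rw [hc, input_sum f g M b x y]
    exact (C_zero (mk_good f hf g M hg hM b) hQ rfl rfl rfl rfl hQb x y).symm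
  refine ⟨T, c, fun k => (1, 16 * ((k : ℕ) : ℤ) + 8), o, by omega, ?_, ?_, ?_, ?_, ?_⟩
  · refine Set.Finite.subset ((Set.finite_Icc (o.1 - T) (o.1 + T)).prod
      (Set.finite_Icc (o.2 - T) (o.2 + T))) ?_
    intro v hv
    rw [Function.mem_support] at hv
    simp only [c] at hv
    split_ifs at hv with h
    · rw [abs_le, abs_le] at h
      simp only [Set.mem_prod, Set.mem_Icc]
      omega
    · exact absurd rfl hv
  · intro k l h
    simp only [Prod.mk.injEq] at h
    apply Fin.ext; omega
  · intro k h
    simp only [o, Prod.mk.injEq] at h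
    omega
  · simp only [c]
    split_ifs
    · exact C_out_zero hQ
    · rfl
  · intro b
    have hP := mk_good f hf g M hg hM b
    constructor
    · rintro ⟨t, ht, hpos⟩
      by_contra hfb
      have hfb : (mk' f g M b).has = false := by
        change f b = false
        simpa using hfb
      rw [hrun b t ht, run_eq hP t (by rw [hfb]; simp)] at hpos
      rw [show o = (16 * (mk' f g M b).m + 1, 16 * (mk' f g M b).n + 3) from rfl,
        C_out_no hfb] at hpos
      exact absurd hpos (lt_irrefl _)
    · intro hfb
      have hh : (mk' f g M b).has = true := hfb
      have h1 := hP.S_lt hh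
      have h2 := hP.S_nonneg hh
      have h3 := hP.Dlow _ h2
      have hout := C_out_yes hP hh
      have hD : (mk' f g M b).D (mk' f g M b).S = 32 * (((mk' f g M b).S + 1) * (M + 2)) := rfl
      have hm : (mk' f g M b).m = M := rfl
      have hn : (mk' f g M b).n = n := rfl
      have hle : (mk' f g M b).D (mk' f g M b).S ≤ 32 * ((M + 1) * (M + 2)) := by
        rw [hD]; rw [hm] at h1
        have : (0 : ℤ) ≤ M := by omega
        nlinarith
      have hre := run_eq hP ((mk' f g M b).D (mk' f g M b).S + 32 * (mk' f g M b).n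
        + 32 * ((mk' f g M b).m - (mk' f g M b).S) - 9).toNat (by intro _; omega)
      refine ⟨((mk' f g M b).D (mk' f g M b).S + 32 * (mk' f g M b).n
        + 32 * ((mk' f g M b).m - (mk' f g M b).S) - 9).toNat, ?_, ?_⟩
      · zify [T]
        push_cast [T]
        omega
      · rw [hrun b _ ?_, hre]
        · rw [Int.toNat_of_nonneg (by omega),
            show o = (16 * (mk' f g M b).m + 1, 16 * (mk' f g M b).n + 3) from rfl, hout]
          exact Nat.one_pos
        · zify [T]
          push_cast [T]
          omega

theorem false_case {n : ℕ} (f : (Fin n → Bool) → Bool) (hx : ∀ x, f x = false) :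
    ∃ (T : ℕ) (c : ℤ × ℤ → ℕ) (i : Fin n → ℤ × ℤ) (o : ℤ × ℤ),
      1 ≤ T ∧ (Function.support c).Finite ∧
      Function.Injective i ∧ (∀ k : Fin n, i k ≠ o) ∧ c o = 0 ∧
      ∀ b : Fin n → Bool,
        (∃ t ≤ T, 0 < runPeriodic wV4H4
            (fun v => c v + ∑ k : Fin n, 4 * bnum (b k) * delta (i k) v) t o)
        ↔ f b = true := by
  refine ⟨1, fun _ => 0, fun k => (((k : ℕ) : ℤ), 0), (0, 100), le_rfl, by simp, ?_, ?_, rfl, ?_⟩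
  · intro k l h
    simp only [Prod.mk.injEq] at h
    apply Fin.ext; omega
  · intro k h
    simp at h
  · intro b
    rw [hx b]
    simp only [Bool.false_eq_true, iff_false]
    rintro ⟨t, ht, hpos⟩
    rw [light_cone wV4H4 _ (fun _ => 0)] at hpos
    · interval_cases t
      · simp [runPeriodic] at hpos
      · simp [runPeriodic, wV4H4, Letter.step, Vstep] at hpos
    · rintro ⟨x, y⟩ h1 h2
      simp only [zero_add]
      apply Finset.sum_eq_zero
      intro k _
      have : delta (((k : ℕ) : ℤ), 0) (x, y) = 0 := by
        unfold delta; rw [if_neg]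
        intro h5
        simp only [Prod.mk.injEq] at h5
        rw [abs_le] at h2
        simp only [] at h2
        omega
      rw [this, mul_zero]

end Par

end Fungal

/-- Simulation of arbitrary monotone Boolean functions by the fungal sandpile
automaton with the word V⁴H⁴. -/
theorem monotone_simulation_V4H4 (n : ℕ) (hn : 1 ≤ n)
    (f : (Fin n → Bool) → Bool) (hf : Monotone f) :
    ∃ (T : ℕ) (c : ℤ × ℤ → ℕ) (i : Fin n → ℤ × ℤ) (o : ℤ × ℤ),
      1 ≤ T ∧ (Function.support c).Finite ∧
      Function.Injective i ∧ (∀ k : Fin n, i k ≠ o) ∧ c o = 0 ∧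
      ∀ b : Fin n → Bool,
        (∃ t ≤ T, 0 < runPeriodic wV4H4
            (fun v => c v + ∑ k : Fin n, 4 * bnum (b k) * delta (i k) v) t o)
        ↔ f b = true := by
  by_cases h : ∃ x, f x = true
  · exact Fungal.Par.main_case f hf h
  · refine Fungal.Par.false_case f (fun x => ?_)
    by_contra hx
    exact h ⟨x, by simpa using hx⟩
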